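/- arXiv:1307.4837 — 2 statements merged into one kernel-verified Lean document; each statement's English description precedes it below -/
import Mathlib

section
/- For all positive integers p and q, the groups G(p;q) and G(q;p) are isomorphic. -/
/-- The word `a_{p-1} a_{p-2} ⋯ a_0` in the free group on `Option ℤ`,
where `some k` stands for the generator `a k` and `none` stands for `ω`. -/
def omegaWord (p : ℕ) : FreeGroup (Option ℤ) :=
  ((List.range p).reverse.map (fun i => FreeGroup.of (some (i : ℤ)))).prod

/-- The relators of the group `G(p;q)`:
`ω = a_{p-1}⋯a_0`, `a_{k+q} = a_k` and `a_{k+p} = ω a_k ω⁻¹` for all `k ∈ ℤ`. -/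
def gRels (p q : ℕ) : Set (FreeGroup (Option ℤ)) :=
  {FreeGroup.of none * (omegaWord p)⁻¹} ∪
    (⋃ k : ℤ, {FreeGroup.of (some (k + (q : ℤ))) * (FreeGroup.of (some k))⁻¹}) ∪
    (⋃ k : ℤ, {FreeGroup.of (some (k + (p : ℤ))) *
      (FreeGroup.of none * FreeGroup.of (some k) * (FreeGroup.of none)⁻¹)⁻¹})

/-- The group `G(p;q)`. -/
abbrev Gpq (p q : ℕ) : Type := PresentedGroup (gRels p q)

/-!
Put `s_0 = 1` and `s_{k+1} = a_k s_k` for all `k ∈ ℤ`, so that `ω = s_p`. In terms of the `s_k` the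
relations of `G(p;q)` say exactly that `s_{k+p} = s_p s_k` and `s_{k+q} = s_k s_q`. Inversion
reverses products, so the elements `s_k⁻¹` satisfy the relations with `p` and `q` exchanged, and
`s_k ↦ s_k⁻¹` defines mutually inverse homomorphisms between `G(p;q)` and `G(q;p)`.
-/

variable {G H : Type*} [Group G] [Group H]

/-- The partial products `s_k` of a bi-infinite sequence `a`: `s_k = a_{k-1} ⋯ a_0` for `k ≥ 0` and
`s_k = (a_{-1} ⋯ a_k)⁻¹` for `k < 0`, the solution of `s_{k+1} = a_k s_k` with `s_0 = 1`. -/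
def partialProd (a : ℤ → G) : ℤ → G
  | (n : ℕ) => ((List.range n).reverse.map fun i => a (i : ℤ)).prod
  | Int.negSucc n => ((List.range (n + 1)).map fun i => a (Int.negSucc i)).prod⁻¹

theorem partialProd_zero (a : ℤ → G) : partialProd a 0 = 1 := rfl

theorem partialProd_add_one (a : ℤ → G) (k : ℤ) :
    partialProd a (k + 1) = a k * partialProd a k := by
  rcases k with n | _ | n
  · change partialProd a ((n + 1 : ℕ) : ℤ) = _
    simp [partialProd, List.range_succ]
  · change (1 : G) = _
    simp [partialProd]
  · change partialProd a (Int.negSucc n) = _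
    simp [partialProd, List.range_succ, mul_assoc]

theorem map_partialProd (f : G →* H) (a : ℤ → G) (k : ℤ) :
    f (partialProd a k) = partialProd (fun i => f (a i)) k := by
  cases k <;> simp [partialProd, map_list_prod, Function.comp_def]

theorem eq_partialProd_mul {a s : ℤ → G} (hs : ∀ k, s (k + 1) = a k * s k) (k : ℤ) :
    s k = partialProd a k * s 0 := by
  induction k with
  | zero => rw [partialProd_zero, one_mul]
  | succ n ih => rw [hs, ih, partialProd_add_one, mul_assoc]
  | pred n ih =>
    refine mul_left_cancel (a := a (-n - 1)) ?_
    rwa [← hs, ← mul_assoc, ← partialProd_add_one, sub_add_cancel]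

theorem partialProd_add (a : ℤ → G) (k n : ℤ) :
    partialProd a (k + n) = partialProd (fun i => a (i + n)) k * partialProd a n := by
  have hs (i : ℤ) : partialProd a (i + 1 + n) = a (i + n) * partialProd a (i + n) := by
    rw [add_right_comm, partialProd_add_one]
  simpa only [zero_add] using eq_partialProd_mul (s := fun i => partialProd a (i + n)) hs k

theorem partialProd_div (t : ℤ → G) (k : ℤ) :
    partialProd (fun i => t (i + 1) / t i) k = t k / t 0 :=
  eq_div_of_mul_eq' (eq_partialProd_mul (fun _ => (div_mul_cancel _ _).symm) k).symm

theorem omegaWord_eq_partialProd (p : ℕ) :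
    omegaWord p = partialProd (fun k => FreeGroup.of (some k)) p := rfl

theorem forall_mem_gRels_map_eq_one_iff (p q : ℕ) (f : FreeGroup (Option ℤ) →* G) :
    (∀ r ∈ gRels p q, f r = 1) ↔
      f (FreeGroup.of none) = partialProd (fun k => f (FreeGroup.of (some k))) p ∧
      (∀ k : ℤ, f (FreeGroup.of (some (k + q))) = f (FreeGroup.of (some k))) ∧
      ∀ k : ℤ, f (FreeGroup.of (some (k + p))) =
        f (FreeGroup.of none) * f (FreeGroup.of (some k)) * (f (FreeGroup.of none))⁻¹ := by
  simp only [gRels, Set.mem_union, Set.mem_iUnion, Set.mem_singleton_iff, or_imp, forall_and,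
    forall_eq, forall_exists_index, forall_comm (β := ℤ), map_mul, map_inv, mul_inv_eq_one,
    omegaWord_eq_partialProd, map_partialProd, and_assoc]

namespace Gpq

/-- The generator `a_k` of `G(p;q)`. -/
def gen (p q : ℕ) (k : ℤ) : Gpq p q := PresentedGroup.of (some k)

/-- The generator `ω` of `G(p;q)`. -/
def omega (p q : ℕ) : Gpq p q := PresentedGroup.of none

/-- The partial products `s_k` of the generators `a_k` of `G(p;q)`. In terms of these the relations
become symmetric in `p` and `q`, up to the order of multiplication. -/
def genProd (p q : ℕ) : ℤ → Gpq p q := partialProd (gen p q)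

theorem relations (p q : ℕ) :
    omega p q = genProd p q p ∧
      (∀ k, gen p q (k + q) = gen p q k) ∧
      ∀ k, gen p q (k + p) = omega p q * gen p q k * (omega p q)⁻¹ :=
  (forall_mem_gRels_map_eq_one_iff p q (PresentedGroup.mk (gRels p q))).1
    fun _ => PresentedGroup.one_of_mem

theorem omega_eq_genProd (p q : ℕ) : omega p q = genProd p q p := (relations p q).1

theorem gen_add_right (p q : ℕ) (k : ℤ) : gen p q (k + q) = gen p q k := (relations p q).2.1 k

theorem gen_add_left (p q : ℕ) (k : ℤ) :
    gen p q (k + p) = MulAut.conj (omega p q) (gen p q k) := (relations p q).2.2 k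

theorem gen_eq_genProd_div (p q : ℕ) (k : ℤ) :
    gen p q k = genProd p q (k + 1) / genProd p q k :=
  eq_div_of_mul_eq' (partialProd_add_one _ k).symm

theorem genProd_add_left (p q : ℕ) (k : ℤ) :
    genProd p q (k + p) = genProd p q p * genProd p q k := by
  have conj_genProd : partialProd (fun i => gen p q (i + p)) k =
      MulAut.conj (omega p q) (genProd p q k) := by
    simp only [gen_add_left]
    exact (map_partialProd (MulAut.conj (omega p q)).toMonoidHom _ k).symm
  calc genProd p q (k + p)
      = MulAut.conj (omega p q) (genProd p q k) * genProd p q p := by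
        rw [← conj_genProd]; exact partialProd_add _ k p
    _ = genProd p q p * genProd p q k := by
        rw [MulAut.conj_apply, omega_eq_genProd, inv_mul_cancel_right]

theorem genProd_add_right (p q : ℕ) (k : ℤ) :
    genProd p q (k + q) = genProd p q k * genProd p q q := by
  simp only [genProd, partialProd_add, gen_add_right]

theorem hom_ext {p q : ℕ} {f g : Gpq p q →* H}
    (h : ∀ k, f (genProd p q k) = g (genProd p q k)) : f = g := by
  refine PresentedGroup.ext ?_
  rintro (_ | k)
  · change f (omega p q) = g (omega p q)
    rw [omega_eq_genProd, h]
  · change f (gen p q k) = g (gen p q k)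
    rw [gen_eq_genProd_div, map_div, map_div, h, h]

section Lift

variable {p q : ℕ} {t : ℤ → H}

/-- The images of the generators under the homomorphism `G(p;q) → H` that sends each partial product
`s_k` to `t k`. -/
def liftGen (p : ℕ) (t : ℤ → H) : Option ℤ → H
  | none => t p
  | some k => t (k + 1) / t k

theorem apply_zero_eq_one {n : ℤ} (hn : ∀ k, t (k + n) = t n * t k) : t 0 = 1 := by
  simpa using hn 0

theorem lift_liftGen_eq_one (hp : ∀ k, t (k + p) = t p * t k) (hq : ∀ k, t (k + q) = t k * t q) :
    ∀ r ∈ gRels p q, FreeGroup.lift (liftGen p t) r = 1 := by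
  simp only [forall_mem_gRels_map_eq_one_iff, FreeGroup.lift_apply_of, liftGen]
  refine ⟨?_, fun k => ?_, fun k => ?_⟩
  · rw [partialProd_div, apply_zero_eq_one hp, div_one]
  · rw [add_right_comm, hq, hq, mul_div_mul_right_eq_div]
  · rw [add_right_comm, hp, hp, div_eq_mul_inv, div_eq_mul_inv, mul_inv_rev]
    simp only [mul_assoc]

/-- The universal property of `G(p;q)` in terms of partial products: the homomorphism to `H` that
sends `s_k` to `t k`. -/
def lift (hp : ∀ k, t (k + p) = t p * t k) (hq : ∀ k, t (k + q) = t k * t q) : Gpq p q →* H :=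
  PresentedGroup.toGroup (lift_liftGen_eq_one hp hq)

theorem lift_genProd (hp : ∀ k, t (k + p) = t p * t k) (hq : ∀ k, t (k + q) = t k * t q) (k : ℤ) :
    lift hp hq (genProd p q k) = t k := by
  have lift_gen (i : ℤ) : lift hp hq (gen p q i) = t (i + 1) / t i := PresentedGroup.toGroup.of _
  simp only [genProd, map_partialProd, lift_gen, partialProd_div, apply_zero_eq_one hp, div_one]

end Lift

/-- The homomorphism `G(p;q) → G(q;p)` that sends `s_k` to `s_k⁻¹`. -/
def swap (p q : ℕ) : Gpq p q →* Gpq q p :=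
  lift (t := fun k => (genProd q p k)⁻¹)
    (fun k => by rw [genProd_add_right, mul_inv_rev])
    (fun k => by rw [genProd_add_left, mul_inv_rev])

theorem swap_genProd (p q : ℕ) (k : ℤ) : swap p q (genProd p q k) = (genProd q p k)⁻¹ :=
  lift_genProd _ _ k

theorem swap_comp_swap (p q : ℕ) : (swap q p).comp (swap p q) = MonoidHom.id (Gpq p q) :=
  hom_ext fun k => by
    rw [MonoidHom.comp_apply, swap_genProd, map_inv, swap_genProd, inv_inv, MonoidHom.id_apply]

end Gpq

/-- For all positive integers `p` and `q`, the groups `G(p;q)` and `G(q;p)` are isomorphic. -/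
theorem stmt_4 (p q : ℕ) (hp : 0 < p) (hq : 0 < q) :
    Nonempty (Gpq p q ≃* Gpq q p) := by
  exact ⟨(Gpq.swap p q).toMulEquiv (Gpq.swap q p)
    (Gpq.swap_comp_swap p q) (Gpq.swap_comp_swap q p)⟩
end

section
/- Let p and q be positive integers with gcd(p,q) = 1. Then the group G(p;q;q) is isomorphic to the free product ℤ/pℤ * ℤ/qℤ. -/
/-- The relators of the group `G(p;q;r)`: those of `G(p;q)` together with `ω^r = e`. -/
def gRelsProj (p q r : ℕ) : Set (FreeGroup (Option ℤ)) :=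
  gRels p q ∪ {(FreeGroup.of none) ^ r}

/-- The group `G(p;q;r)`, the quotient of `G(p;q)` by the relation `ω^r = e`. -/
abbrev Gpqr (p q r : ℕ) : Type := PresentedGroup (gRelsProj p q r)

/-!
In `G(p;q;r)` with `r ∣ q` and `p * u + q * v = 1`, replace the generator `ω` by `z = ω ^ u`, so
that `ω = z ^ p` and `z ^ r = 1`, and put `x = z⁻¹ * a_0`. Every integer `k` is congruent to
`p * (u * k)` modulo `q`, so periodicity and the conjugation relation give
`a_k = z ^ (k + 1) * x * z ^ (-k)`. For a sequence of this shape `a_{p-1} ⋯ a_0` telescopes to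
`z ^ p * x ^ p`, hence the relation `ω = a_{p-1} ⋯ a_0` amounts to `x ^ p = 1`, and the group is
presented by `⟨x, z | x ^ p = z ^ r = 1⟩`.
-/

theorem pow_eq_one_of_dvd {M : Type*} [Monoid M] {w : M} {q r : ℕ} (hw : w ^ r = 1)
    (hrq : r ∣ q) : w ^ q = 1 :=
  orderOf_dvd_iff_pow_eq_one.mp ((orderOf_dvd_of_pow_eq_one hw).trans hrq)

theorem zpow_pow_eq_one {H : Type*} [Group H] {w : H} {r : ℕ} (hw : w ^ r = 1) (u : ℤ) :
    (w ^ u) ^ r = 1 := by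
  rw [← zpow_natCast, zpow_comm, zpow_natCast, hw, one_zpow]

theorem zpow_eq_self_of_add_mul_eq_one {H : Type*} [Group H] {w : H} {q : ℕ} (hw : w ^ q = 1)
    {m v : ℤ} (hm : m + q * v = 1) : w ^ m = w := by
  rw [eq_sub_of_add_eq hm, zpow_sub, zpow_one, zpow_mul, zpow_natCast, hw, one_zpow, inv_one,
    mul_one]

section CyclicGroup

variable {H : Type*} [Group H] {n : ℕ}

/-- The homomorphism from `ℤ/nℤ` that sends its standard generator to an element `h` with
`h ^ n = 1`. -/
def zmodPowersHom (h : H) (hn : h ^ n = 1) : Multiplicative (ZMod n) →* H :=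
  AddMonoidHom.toMultiplicativeLeft <|
    ZMod.lift n ⟨zmultiplesHom (Additive H) (Additive.ofMul h), by simp [← ofMul_pow, hn]⟩

theorem zmodPowersHom_ofAdd_one (h : H) (hn : h ^ n = 1) :
    zmodPowersHom h hn (Multiplicative.ofAdd 1) = h := by
  rw [← Int.cast_one, zmodPowersHom, AddMonoidHom.coe_toMultiplicativeLeft]
  simp only [Function.comp_apply, toAdd_ofAdd, ZMod.lift_coe, zmultiplesHom_apply, one_zsmul,
    toMul_ofMul]

theorem monoidHom_multiplicative_zmod_ext {f g : Multiplicative (ZMod n) →* H}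
    (h : f (Multiplicative.ofAdd 1) = g (Multiplicative.ofAdd 1)) : f = g := by
  refine MonoidHom.ext fun x => ?_
  obtain ⟨k, hk⟩ := ZMod.intCast_surjective (Multiplicative.toAdd x)
  obtain rfl : Multiplicative.ofAdd (1 : ZMod n) ^ k = x := by
    rw [← ofAdd_zsmul, zsmul_one, hk, ofAdd_toAdd]
  rw [map_zpow, map_zpow, h]

theorem map_ofAdd_one_pow_eq_one {M : Type*} [Monoid M] (f : Multiplicative (ZMod n) →* M) :
    f (Multiplicative.ofAdd 1) ^ n = 1 := by
  rw [← map_pow, ← ofAdd_nsmul, nsmul_one, ZMod.natCast_self, ofAdd_zero, map_one]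

end CyclicGroup

section FreeProduct

open Monoid.Coprod (inl inr)

variable {H : Type*} [Group H] {p r : ℕ}

/-- The homomorphism out of `ℤ/pℤ * ℤ/rℤ` that sends the standard generators of the two factors to
`x` and `z`. -/
def coprodLift {x z : H} (hx : x ^ p = 1) (hz : z ^ r = 1) :
    Monoid.Coprod (Multiplicative (ZMod p)) (Multiplicative (ZMod r)) →* H :=
  Monoid.Coprod.lift (zmodPowersHom x hx) (zmodPowersHom z hz)

theorem coprodLift_inl {x z : H} (hx : x ^ p = 1) (hz : z ^ r = 1) :
    coprodLift hx hz (inl (Multiplicative.ofAdd 1)) = x := by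
  rw [coprodLift, Monoid.Coprod.lift_apply_inl, zmodPowersHom_ofAdd_one]

theorem coprodLift_inr {x z : H} (hx : x ^ p = 1) (hz : z ^ r = 1) :
    coprodLift hx hz (inr (Multiplicative.ofAdd 1)) = z := by
  rw [coprodLift, Monoid.Coprod.lift_apply_inr, zmodPowersHom_ofAdd_one]

theorem coprod_hom_ext
    {f g : Monoid.Coprod (Multiplicative (ZMod p)) (Multiplicative (ZMod r)) →* H}
    (hl : f (inl (Multiplicative.ofAdd 1)) = g (inl (Multiplicative.ofAdd 1)))
    (hr : f (inr (Multiplicative.ofAdd 1)) = g (inr (Multiplicative.ofAdd 1))) : f = g :=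
  Monoid.Coprod.hom_ext (monoidHom_multiplicative_zmod_ext hl)
    (monoidHom_multiplicative_zmod_ext hr)

end FreeProduct

section Sequences

variable {H K : Type*} [Group H] [Group K]

/-- The sequence `k ↦ z ^ (k + 1) * x * z ^ (-k)`: the general form of the `a_k` in `G(p;q;r)`,
chosen so that `a_{n-1} ⋯ a_0` telescopes. -/
def telescopingSeq (z x : H) (k : ℤ) : H :=
  z ^ (k + 1) * x * z ^ (-k)

theorem map_telescopingSeq (φ : H →* K) (z x : H) (k : ℤ) :
    φ (telescopingSeq z x k) = telescopingSeq (φ z) (φ x) k := by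
  simp only [telescopingSeq, map_mul, map_zpow]

theorem telescopingSeq_zero (z x : H) : telescopingSeq z x 0 = z * x := by
  simp [telescopingSeq]

theorem telescopingSeq_add (z x : H) (k m : ℤ) :
    telescopingSeq z x (k + m) = z ^ m * telescopingSeq z x k * (z ^ m)⁻¹ := by
  unfold telescopingSeq
  group

theorem prod_telescopingSeq (z x : H) (n : ℕ) :
    ((List.range n).reverse.map fun i : ℕ => telescopingSeq z x i).prod = z ^ n * x ^ n := by
  induction n with
  | zero => simp
  | succ n ih =>
    rw [List.range_succ, List.reverse_concat, List.map_cons, List.prod_cons, ih, telescopingSeq,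
      zpow_neg, zpow_natCast, mul_assoc, mul_assoc, inv_mul_cancel_left, ← pow_succ',
      ← Nat.cast_succ, zpow_natCast]

-- The conjugates `w ^ (-j) * a (k + j * p) * w ^ j` do not depend on `j`.
theorem apply_add_mul_eq_conj {a : ℤ → H} {w : H} {p : ℤ}
    (ha : ∀ k, a (k + p) = w * a k * w⁻¹) (k m : ℤ) :
    a (k + m * p) = w ^ m * a k * (w ^ m)⁻¹ := by
  have hper : Function.Periodic (fun j : ℤ => (w ^ j)⁻¹ * a (k + j * p) * w ^ j) 1 := by
    intro j
    simp only [add_one_mul, ← add_assoc, ha, zpow_add_one]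
    group
  have hm : (w ^ m)⁻¹ * a (k + m * p) * w ^ m = a k := by
    simpa using hper.int_mul_eq m
  rw [← hm]
  group

end Sequences

namespace Gpqr

open Monoid.Coprod (inl inr)

variable {H : Type*} [Group H] {p q r : ℕ}

/-- The elements `w` and `a k` of a group `H` satisfy the defining relations of `G(p;q;r)`, with
`w` in the role of `ω`. -/
structure Relations (p q r : ℕ) (w : H) (a : ℤ → H) : Prop where
  eq_prod : w = ((List.range p).reverse.map fun i : ℕ => a i).prod
  periodic : Function.Periodic a (q : ℤ)
  apply_add : ∀ k, a (k + p) = w * a k * w⁻¹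
  pow_eq_one : w ^ r = 1

theorem map_omegaWord (φ : FreeGroup (Option ℤ) →* H) (p : ℕ) :
    φ (omegaWord p) =
      ((List.range p).reverse.map fun i : ℕ => φ (FreeGroup.of (some (i : ℤ)))).prod := by
  -- In `omegaWord` the cast `ℕ → ℤ` is elaborated as a monadic coercion of the whole list.
  simp only [omegaWord, List.bind_eq_flatMap, List.pure_def, map_list_prod, List.map_map,
    Function.comp_def]
  rw [← List.map_eq_flatMap, List.map_map, Function.comp_def]

theorem forall_mem_gRelsProj_map_eq_one_iff (φ : FreeGroup (Option ℤ) →* H) :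
    (∀ s ∈ gRelsProj p q r, φ s = 1) ↔
      Relations p q r (φ (FreeGroup.of none)) fun k => φ (FreeGroup.of (some k)) := by
  simp only [gRelsProj, gRels, Set.mem_union, Set.mem_iUnion, Set.mem_singleton_iff, or_imp,
    forall_and, forall_eq, forall_exists_index, forall_comm (α := FreeGroup _), map_mul, map_inv,
    map_pow, mul_inv_eq_one, map_omegaWord]
  exact ⟨fun ⟨⟨⟨hprod, hper⟩, hconj⟩, hpow⟩ => ⟨hprod, hper, hconj, hpow⟩,
    fun ⟨hprod, hper, hconj, hpow⟩ => ⟨⟨⟨hprod, hper⟩, hconj⟩, hpow⟩⟩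

theorem relations_of :
    Relations p q r (PresentedGroup.of none : Gpqr p q r) fun k => PresentedGroup.of (some k) :=
  (forall_mem_gRelsProj_map_eq_one_iff (PresentedGroup.mk _)).mp
    fun _ => PresentedGroup.one_of_mem

/-- The homomorphism out of `G(p;q;r)` given by its universal property: `ω ↦ w`, `a_k ↦ a k`. -/
def lift {w : H} {a : ℤ → H} (h : Relations p q r w a) : Gpqr p q r →* H :=
  PresentedGroup.toGroup (f := fun i => i.elim w a)
    ((forall_mem_gRelsProj_map_eq_one_iff _).mpr (by simpa using h))

theorem lift_of_none {w : H} {a : ℤ → H} (h : Relations p q r w a) :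
    lift h (PresentedGroup.of none) = w :=
  PresentedGroup.toGroup.of _

theorem lift_of_some {w : H} {a : ℤ → H} (h : Relations p q r w a) (k : ℤ) :
    lift h (PresentedGroup.of (some k)) = a k :=
  PresentedGroup.toGroup.of _

theorem relations_telescopingSeq {z x : H} (hx : x ^ p = 1) (hz : z ^ r = 1) (hrq : r ∣ q) :
    Relations p q r (z ^ p) (telescopingSeq z x) where
  eq_prod := by rw [prod_telescopingSeq, hx, mul_one]
  periodic k := by
    rw [telescopingSeq_add, zpow_natCast, pow_eq_one_of_dvd hz hrq, one_mul, inv_one, mul_one]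
  apply_add k := by rw [telescopingSeq_add, zpow_natCast]
  pow_eq_one := by rw [pow_right_comm, hz, one_pow]

namespace Relations

variable {w : H} {a : ℤ → H} {u v : ℤ}

theorem telescopingSeq_eq (h : Relations p q r w a) (huv : p * u + q * v = 1) :
    telescopingSeq (w ^ u) ((w ^ u)⁻¹ * a 0) = a := by
  funext k
  calc telescopingSeq (w ^ u) ((w ^ u)⁻¹ * a 0) k
      = w ^ (k * u) * a 0 * (w ^ (k * u))⁻¹ := by
        rw [← zero_add k, telescopingSeq_add, telescopingSeq_zero, mul_inv_cancel_left, zero_add,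
          ← zpow_mul, mul_comm]
    _ = a (0 + k * u * p) := (apply_add_mul_eq_conj h.apply_add 0 _).symm
    _ = a (0 + k * u * p + k * v * q) := (h.periodic.int_mul _ _).symm
    _ = a k := congrArg a (by linear_combination k * huv)

theorem inv_zpow_mul_apply_zero_pow (h : Relations p q r w a) (hrq : r ∣ q)
    (huv : p * u + q * v = 1) : ((w ^ u)⁻¹ * a 0) ^ p = 1 := by
  have hprod : w = w ^ (p * u) * ((w ^ u)⁻¹ * a 0) ^ p := by
    rw [zpow_mul', zpow_natCast, ← prod_telescopingSeq, h.telescopingSeq_eq huv]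
    exact h.eq_prod
  rw [zpow_eq_self_of_add_mul_eq_one (pow_eq_one_of_dvd h.pow_eq_one hrq) huv] at hprod
  exact mul_eq_left.mp hprod.symm

end Relations

/-- The homomorphism `ω ↦ z ^ p`, `a_k ↦ z ^ (k + 1) * x * z ^ (-k)`, where `x` and `z` are the
standard generators of the two factors. -/
def toCoprod (p : ℕ) (hrq : r ∣ q) :
    Gpqr p q r →* Monoid.Coprod (Multiplicative (ZMod p)) (Multiplicative (ZMod r)) :=
  lift <| relations_telescopingSeq (map_ofAdd_one_pow_eq_one inl) (map_ofAdd_one_pow_eq_one inr) hrq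

/-- The homomorphism `x ↦ ω ^ (-u) * a_0`, `z ↦ ω ^ u`, inverse to `toCoprod`. -/
def ofCoprod {u v : ℤ} (hrq : r ∣ q) (huv : p * u + q * v = 1) :
    Monoid.Coprod (Multiplicative (ZMod p)) (Multiplicative (ZMod r)) →* Gpqr p q r :=
  coprodLift (relations_of.inv_zpow_mul_apply_zero_pow hrq huv)
    (zpow_pow_eq_one relations_of.pow_eq_one u)

theorem ofCoprod_comp_toCoprod {u v : ℤ} (hrq : r ∣ q) (huv : p * u + q * v = 1) :
    (ofCoprod hrq huv).comp (toCoprod p hrq) = MonoidHom.id _ := by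
  refine PresentedGroup.ext fun i => ?_
  rw [MonoidHom.comp_apply, MonoidHom.id_apply, toCoprod, ofCoprod]
  cases i with
  | none =>
    rw [lift_of_none, map_pow, coprodLift_inr, ← zpow_natCast, ← zpow_mul',
      zpow_eq_self_of_add_mul_eq_one (pow_eq_one_of_dvd relations_of.pow_eq_one hrq) huv]
  | some k =>
    rw [lift_of_some, map_telescopingSeq, coprodLift_inl, coprodLift_inr,
      relations_of.telescopingSeq_eq huv]

theorem toCoprod_comp_ofCoprod {u v : ℤ} (hrq : r ∣ q) (huv : p * u + q * v = 1) :
    (toCoprod p hrq).comp (ofCoprod hrq huv) = MonoidHom.id _ := by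
  have hz : toCoprod p hrq (PresentedGroup.of none ^ u) = inr (Multiplicative.ofAdd 1) := by
    rw [map_zpow, toCoprod, lift_of_none, ← zpow_natCast, ← zpow_mul]
    exact zpow_eq_self_of_add_mul_eq_one (pow_eq_one_of_dvd (map_ofAdd_one_pow_eq_one _) hrq) huv
  apply coprod_hom_ext
  · rw [MonoidHom.comp_apply, MonoidHom.id_apply, ofCoprod, coprodLift_inl, map_mul, map_inv, hz,
      toCoprod, lift_of_some, telescopingSeq_zero, inv_mul_cancel_left]
  · rw [MonoidHom.comp_apply, MonoidHom.id_apply, ofCoprod, coprodLift_inr, hz]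

/-- The isomorphism of `G(p;q;r)` with `ℤ/pℤ * ℤ/rℤ` attached to Bézout coefficients of `p` and
`q`. -/
def mulEquivCoprod {u v : ℤ} (hrq : r ∣ q) (huv : p * u + q * v = 1) :
    Gpqr p q r ≃* Monoid.Coprod (Multiplicative (ZMod p)) (Multiplicative (ZMod r)) :=
  MonoidHom.toMulEquiv (toCoprod p hrq) (ofCoprod hrq huv)
    (ofCoprod_comp_toCoprod hrq huv) (toCoprod_comp_ofCoprod hrq huv)

end Gpqr

theorem stmt_10_general (p q r : ℕ) (hpq : Nat.gcd p q = 1) (hrq : r ∣ q) :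
    Nonempty (Gpqr p q r ≃* Monoid.Coprod (Multiplicative (ZMod p)) (Multiplicative (ZMod r))) := by
  have bezout : (p : ℤ) * p.gcdA q + q * p.gcdB q = 1 := by
    rw [← Nat.gcd_eq_gcd_ab, hpq, Nat.cast_one]
  exact ⟨Gpqr.mulEquivCoprod hrq bezout⟩

/-- If `gcd(p,q) = 1`, then `G(p;q;q)` is isomorphic to the free product `ℤ/pℤ * ℤ/qℤ`. -/
theorem stmt_10 (p q : ℕ) (hp : 0 < p) (hq : 0 < q) (hpq : Nat.gcd p q = 1) :
    Nonempty (Gpqr p q q ≃* Monoid.Coprod (Multiplicative (ZMod p)) (Multiplicative (ZMod q))) := by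
  exact stmt_10_general p q q hpq dvd_rfl
end
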